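/- arXiv:1408.4747 — 4 statements merged into one kernel-verified Lean document; each statement's English description precedes it below -/
import Mathlib

section
/- Let (ξ_n)_{n≥1} be any sequence of real numbers, let μ > 0 and h ∈ [0,∞), let (W_n)_{n≥0} be the DE-CuSum sequence started at 0 and (C_n)_{n≥0} the CuSum sequence started at 0, both driven by (ξ_n). Then C_n ≥ W_n for all n ≥ 0. -/
open MeasureTheory Filter Set ProbabilityTheory
open scoped ENNReal

/-- CuSum sequence started at `c`, driven by the sequence `ξ`
(`ξ n` is the `(n+1)`-th increment, so the sequence is indexed from 1 via `n ↦ ξ (n-1)`). -/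
def cusum (ξ : ℕ → ℝ) (c : ℝ) : ℕ → ℝ
  | 0 => c
  | n + 1 => max 0 (cusum ξ c n + ξ n)
/-- DE-CuSum sequence with parameters `μ > 0` and `h ∈ [0,∞)`, started at `w`:
`W_{n+1} = min (W_n + μ) 0` if `W_n < 0`, and `W_{n+1} = max (W_n + ξ_{n+1}) (-h)` if `W_n ≥ 0`. -/
noncomputable def deCusum (ξ : ℕ → ℝ) (μ h w : ℝ) : ℕ → ℝ
  | 0 => w
  | n + 1 =>
    if deCusum ξ μ h w n < 0 then min (deCusum ξ μ h w n + μ) 0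
    else max (deCusum ξ μ h w n + ξ n) (-h)

/-- For any real sequence `ξ`, `μ > 0`, `h ∈ [0,∞)`, the CuSum sequence started at `0`
dominates the DE-CuSum sequence started at `0`: `C_n ≥ W_n` for all `n ≥ 0`. -/
theorem cusum_ge_deCusum (ξ : ℕ → ℝ) (μ h : ℝ) (hμ : 0 < μ) (hh : 0 ≤ h) :
    ∀ n : ℕ, deCusum ξ μ h 0 n ≤ cusum ξ 0 n := by
  intro n
  induction n with
  | zero => simp [deCusum, cusum]
  | succ n ih =>
    rw [deCusum, cusum]
    split_ifs with hw
    · exact (min_le_right _ _).trans (le_max_left _ _)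
    · refine max_le ?_ ?_
      · exact le_trans (by linarith) (le_max_right _ _)
      · exact le_trans (by linarith) (le_max_left _ _)
end

section
/- Let (ξ_n)_{n≥1} be any sequence of real numbers, let μ > 0, h ∈ [0,∞) and A ∈ ℝ. Let (W_n)_{n≥0} be the DE-CuSum sequence started at 0 and (C_n)_{n≥0} the CuSum sequence started at 0, both driven by (ξ_n), and define the hitting times τ_W = inf{n ≥ 1 : W_n > A} and τ_C = inf{n ≥ 1 : C_n > A} (with values in ℕ ∪ {∞} and inf ∅ = ∞). Then τ_C ≤ τ_W. In particular, for any probability measure under which (ξ_n) is a random sequence, E[τ_W] ≥ E[τ_C], so the false alarm rate of the DE-CuSum stopping time is at most that of the CuSum stopping time. -/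
open MeasureTheory Filter Set ProbabilityTheory
open scoped ENNReal

/-- First time `n ≥ 1` at which `P n` holds, valued in `ℕ∞` with `inf ∅ = ∞`. -/
noncomputable def firstTime (P : ℕ → Prop) : ℕ∞ :=
  sInf ((↑) '' {n : ℕ | 1 ≤ n ∧ P n})

theorem deCusum_le_cusum_aux (ξ : ℕ → ℝ) (μ h : ℝ) (hh : 0 ≤ h) (n : ℕ) :
    deCusum ξ μ h 0 n ≤ cusum ξ 0 n := by
  induction n with
  | zero => simp [deCusum, cusum]
  | succ n ih =>
    simp only [deCusum, cusum]
    split_ifs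
    · exact (min_le_right _ _).trans (le_max_left _ _)
    · refine max_le ?_ ?_
      · exact le_max_of_le_right (by linarith)
      · exact le_max_of_le_left (by linarith)

theorem firstTime_le_aux (ξ : ℕ → ℝ) (μ h A : ℝ) (hh : 0 ≤ h) :
    firstTime (fun n => A < cusum ξ 0 n) ≤ firstTime (fun n => A < deCusum ξ μ h 0 n) := by
  unfold firstTime
  apply sInf_le_sInf
  apply Set.image_mono
  rintro n ⟨h1, h2⟩
  exact ⟨h1, lt_of_lt_of_le h2 (deCusum_le_cusum_aux ξ μ h hh n)⟩

/-- The CuSum hitting time of level `A` is at most the DE-CuSum hitting time of `A`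
(both started at 0); in particular, for any probability measure generating the sequence,
`E[τ_W] ≥ E[τ_C]`, so the false alarm rate of DE-CuSum is at most that of CuSum. -/
theorem cusum_hit_le_deCusum_hit (ξ : ℕ → ℝ) (μ h A : ℝ) (hμ : 0 < μ) (hh : 0 ≤ h) :
    firstTime (fun n => A < cusum ξ 0 n) ≤ firstTime (fun n => A < deCusum ξ μ h 0 n) ∧
    ∀ (Ω : Type) (_ : MeasurableSpace Ω) (P : Measure Ω), IsProbabilityMeasure P →
      ∀ ζ : ℕ → Ω → ℝ,
        ∫⁻ ω, (firstTime (fun n => A < cusum (fun k => ζ k ω) 0 n) : ℝ≥0∞) ∂P ≤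
          ∫⁻ ω, (firstTime (fun n => A < deCusum (fun k => ζ k ω) μ h 0 n) : ℝ≥0∞) ∂P := by
  refine ⟨firstTime_le_aux ξ μ h A hh, ?_⟩
  intro Ω _ P _ ζ
  apply lintegral_mono
  intro ω
  exact ENat.toENNReal_mono (firstTime_le_aux _ μ h A hh)
end

section
/- Let (ξ_n)_{n≥1} be any sequence of real numbers, let μ > 0 and h ∈ [0,∞), and let (W_n)_{n≥0} be the DE-CuSum sequence started at w ∈ [−h, ∞). Then: (i) W_n ≥ −h for all n ≥ 0; (ii) whenever W_n < 0, setting m = ⌈−W_n/μ⌉ one has W_{n+j} < 0 for all 0 ≤ j < m and W_{n+m} = 0, and m ≤ ⌈h/μ⌉. Consequently the number of consecutive indices at which the DE-CuSum statistic is negative (i.e., consecutive skipped samples) never exceeds ⌈h/μ⌉. -/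
open MeasureTheory Filter Set ProbabilityTheory
open scoped ENNReal

/-- The DE-CuSum statistic started at `w ∈ [-h, ∞)` stays in `[-h, ∞)`; moreover, whenever
`W_n < 0`, with `m = ⌈-W_n/μ⌉` one has `W_{n+j} < 0` for `0 ≤ j < m`, `W_{n+m} = 0`, and
`m ≤ ⌈h/μ⌉`: the number of consecutive skipped samples never exceeds `⌈h/μ⌉`. -/
theorem deCusum_skip_bound (ξ : ℕ → ℝ) (μ h w : ℝ) (hμ : 0 < μ) (hh : 0 ≤ h) (hw : -h ≤ w) :
    (∀ n : ℕ, -h ≤ deCusum ξ μ h w n) ∧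
    ∀ n : ℕ, deCusum ξ μ h w n < 0 →
      (∀ j : ℕ, j < ⌈-deCusum ξ μ h w n / μ⌉₊ → deCusum ξ μ h w (n + j) < 0) ∧
      deCusum ξ μ h w (n + ⌈-deCusum ξ μ h w n / μ⌉₊) = 0 ∧
      ⌈-deCusum ξ μ h w n / μ⌉₊ ≤ ⌈h / μ⌉₊ := by
  have hstep : ∀ n, deCusum ξ μ h w (n + 1) =
      if deCusum ξ μ h w n < 0 then min (deCusum ξ μ h w n + μ) 0
      else max (deCusum ξ μ h w n + ξ n) (-h) := fun n => rfl
  have hlow : ∀ n : ℕ, -h ≤ deCusum ξ μ h w n := by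
    intro n
    induction n with
    | zero => exact hw
    | succ k ih =>
      rw [hstep]
      split_ifs
      · exact le_min (by linarith) (by linarith)
      · exact le_max_right _ _
  refine ⟨hlow, fun n hn => ?_⟩
  have hneg : ∀ j : ℕ, j < ⌈-deCusum ξ μ h w n / μ⌉₊ →
      deCusum ξ μ h w n + j * μ < 0 := by
    intro j hj
    rw [Nat.lt_ceil, lt_div_iff₀ hμ] at hj
    linarith
  have hlin : ∀ j : ℕ, j < ⌈-deCusum ξ μ h w n / μ⌉₊ →
      deCusum ξ μ h w (n + j) = deCusum ξ μ h w n + j * μ := by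
    intro j
    induction j with
    | zero => intro _; simp
    | succ k ih =>
      intro hj
      have h1 := ih (by omega)
      have h2 := hneg k (by omega)
      have h3 := hneg (k + 1) hj
      push_cast at h3 ⊢
      rw [← add_assoc, hstep, h1, if_pos h2, min_eq_left (by linarith)]
      ring
  refine ⟨fun j hj => by rw [hlin j hj]; exact hneg j hj, ?_, ?_⟩
  · have hpos : 0 < ⌈-deCusum ξ μ h w n / μ⌉₊ :=
      Nat.ceil_pos.mpr (div_pos (by linarith) hμ)
    have hle := Nat.le_ceil (-deCusum ξ μ h w n / μ)
    obtain ⟨k, hk⟩ := Nat.exists_eq_succ_of_ne_zero hpos.ne'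
    have h1 := hlin k (by omega)
    have h2 := hneg k (by omega)
    rw [hk, div_le_iff₀ hμ] at hle
    push_cast at hle
    rw [hk, Nat.succ_eq_add_one, ← add_assoc, hstep, h1, if_pos h2, min_eq_right (by linarith)]
  · have := hlow n
    exact Nat.ceil_mono (div_le_div_of_nonneg_right (by linarith) hμ.le)
end

section
/- Fix L ≥ 1 and for each ℓ ∈ {1,…,L} let (ξ_{n,ℓ})_{n≥1} be a real sequence, μ_ℓ > 0, h_ℓ ∈ [0,∞), and a_ℓ ∈ ℝ. Let (W_{n,ℓ})_{n≥0} be the DE-CuSum sequence started at 0 and (C_{n,ℓ})_{n≥0} the CuSum sequence started at 0, both driven by (ξ_{n,ℓ}). Then the DE-All stopping time inf{n ≥ 1 : W_{n,ℓ} > a_ℓ for all ℓ} is at least the ALL stopping time inf{n ≥ 1 : C_{n,ℓ} > a_ℓ for all ℓ} (in ℕ ∪ {∞}). In particular, under any probability measure generating the sensor observations, the expected stopping time of the DE-All scheme is at least that of the ALL scheme, so FAR(DE-All) ≤ FAR(ALL). -/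
open MeasureTheory Filter Set ProbabilityTheory
open scoped ENNReal

theorem cusum_nonneg_aux (ξ : ℕ → ℝ) (n : ℕ) : 0 ≤ cusum ξ 0 n := by
  cases n with
  | zero => simp [cusum]
  | succ n => simp [cusum]

theorem firstTime_anti_aux {p q : ℕ → Prop} (hpq : ∀ n, q n → p n) :
    firstTime p ≤ firstTime q :=
  sInf_le_sInf (Set.image_mono fun n hn => ⟨hn.1, hpq n hn.2⟩)

/-- With `L ≥ 1` sensors, thresholds `a_ℓ`, the DE-All stopping time (first time the DE-CuSum
statistics at all sensors simultaneously exceed their thresholds) is at least the ALL stopping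
time (same with local CuSum statistics). In particular, under any probability measure
generating the sensor observations, the expected DE-All stopping time is at least the expected
ALL stopping time, so `FAR(DE-All) ≤ FAR(ALL)`. -/
theorem deAll_ge_all (L : ℕ) (hL : 1 ≤ L) (ξ : Fin L → ℕ → ℝ) (μ h a : Fin L → ℝ)
    (hμ : ∀ ℓ, 0 < μ ℓ) (hh : ∀ ℓ, 0 ≤ h ℓ) :
    firstTime (fun n => ∀ ℓ, a ℓ < cusum (ξ ℓ) 0 n) ≤
      firstTime (fun n => ∀ ℓ, a ℓ < deCusum (ξ ℓ) (μ ℓ) (h ℓ) 0 n) ∧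
    ∀ (Ω : Type) (_ : MeasurableSpace Ω) (P : Measure Ω), IsProbabilityMeasure P →
      ∀ ζ : Fin L → ℕ → Ω → ℝ,
        ∫⁻ ω, (firstTime (fun n => ∀ ℓ, a ℓ < cusum (fun k => ζ ℓ k ω) 0 n) : ℝ≥0∞) ∂P ≤
          ∫⁻ ω, (firstTime
            (fun n => ∀ ℓ, a ℓ < deCusum (fun k => ζ ℓ k ω) (μ ℓ) (h ℓ) 0 n) : ℝ≥0∞) ∂P := by
  have key : ∀ ζ : Fin L → ℕ → ℝ, firstTime (fun n => ∀ ℓ, a ℓ < cusum (ζ ℓ) 0 n) ≤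
      firstTime (fun n => ∀ ℓ, a ℓ < deCusum (ζ ℓ) (μ ℓ) (h ℓ) 0 n) := fun ζ =>
    firstTime_anti_aux fun n hn ℓ =>
      (hn ℓ).trans_le (deCusum_le_cusum_aux (ζ ℓ) (μ ℓ) (h ℓ) (hh ℓ) n)
  refine ⟨key ξ, fun Ω _ P _ ζ => lintegral_mono fun ω => ?_⟩
  exact ENat.toENNReal_le.2 (key fun ℓ k => ζ ℓ k ω)
end
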